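/- Let G = (V,E) be a finite simple graph and let M be a collection of open wedges of G that is pairwise edge-disjoint (no edge of G belongs to two wedges of M, where the edges of a wedge (i,j,k) centered at k are {i,k} and {j,k}) and maximal with this property (every open wedge of G shares an edge with some wedge in M). Then there exists a partition of V into cliques of G with at most 4·|M| cut edges; moreover every clique partition of G has at least |M| cut edges, so this clique partition has at most 4·OPT^CD cut edges, where OPT^CD is the minimum number of cut edges over all clique partitions of G. -/

import Mathlib

open Finset

/-- The finset of ordered pairs `(i, j)` with `i < j`, representing unordered pairs
of distinct elements of `V`. -/
def pairsLt (V : Type*) [Fintype V] [LinearOrder V] : Finset (V × V) :=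
  Finset.univ.filter fun p => p.1 < p.2

/-- `(i, j, k)` is an open wedge centered at `k`. -/
def IsOpenWedge {V : Type*} (G : SimpleGraph V) (i j k : V) : Prop :=
  G.Adj i k ∧ G.Adj j k ∧ i ≠ j ∧ ¬ G.Adj i j

/-- `C` is a partition of the vertex set into cliques of `G`. -/
def IsCliquePartition {V : Type*} (G : SimpleGraph V) (C : V → ℕ) : Prop :=
  ∀ i j, i ≠ j → C i = C j → G.Adj i j

/-- The number of cut edges of a partition `C`. -/
def cutEdges {V : Type*} [Fintype V] [LinearOrder V]
    (G : SimpleGraph V) [DecidableRel G.Adj] (C : V → ℕ) : ℕ :=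
  ((pairsLt V).filter fun p => G.Adj p.1 p.2 ∧ C p.1 ≠ C p.2).card

/-- The two edges of a wedge `(i, j, k)` centered at `k`, namely `{i,k}` and `{j,k}`. -/
def wedgeEdges {V : Type*} [DecidableEq V] (t : V × V × V) : Finset (Sym2 V) :=
  {s(t.1, t.2.2), s(t.2.1, t.2.2)}

/-!
A clique partition cuts an edge of each open wedge, so edge-disjointness gives the lower bound.
For the upper bound let `F` be the graph of the edges used by `M` and let `H = G \ F`. By
maximality of `M`, the outer vertices of an open wedge of `H` are joined by an edge of `F`; so
the closed `H`-neighbourhood of a vertex is a clique of `G`, and we may repeatedly choose a pivot,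
make its closed `H`-neighbourhood among the remaining vertices a part, and delete it.

An open wedge `k - j - x` of `H` makes the pivot `k` cut the edge `jx` of `H`, and makes the pivot
`j` keep the edge `kx` of `F` inside its part. Summing over all pivots, and noting that a kept
edge is counted in both directions, some pivot cuts at most twice as many edges of `H` as it
keeps edges of `F`. Hence in total at most twice as many edges of `H` are cut as edges of `F` are
kept, and adding the edges of `F` that are cut gives at most `2 |E(F)| ≤ 4 |M|` cut edges.
-/

section CutGraph

variable {V α : Type*}

/-- The graph of the edges of `G` cut by the partition of the vertices into the fibres of `C`. -/
def cutGraph (G : SimpleGraph V) (C : V → α) : SimpleGraph V :=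
  G ⊓ (⊤ : SimpleGraph α).comap C

/-- The graph of the edges of `G` inside the parts of the partition of the vertices into the
fibres of `C`. -/
def innerGraph (G : SimpleGraph V) (C : V → α) : SimpleGraph V :=
  G \ (⊤ : SimpleGraph α).comap C

variable {G : SimpleGraph V} {C : V → α} {a b : V}

lemma cutGraph_adj : (cutGraph G C).Adj a b ↔ G.Adj a b ∧ C a ≠ C b :=
  Iff.rfl

lemma innerGraph_adj : (innerGraph G C).Adj a b ↔ G.Adj a b ∧ C a = C b := by
  simp [innerGraph]

lemma cutGraph_sup (G₁ G₂ : SimpleGraph V) (C : V → α) :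
    cutGraph (G₁ ⊔ G₂) C = cutGraph G₁ C ⊔ cutGraph G₂ C :=
  inf_sup_right ..

variable [DecidableRel G.Adj] [DecidableEq α]

instance : DecidableRel (cutGraph G C).Adj :=
  fun _ _ => decidable_of_iff' _ cutGraph_adj

instance : DecidableRel (innerGraph G C).Adj :=
  fun _ _ => decidable_of_iff' _ innerGraph_adj

variable (G)

lemma card_edgeFinset_cutGraph_add_card_edgeFinset_innerGraph [Fintype V] (C : V → α) :
    #(cutGraph G C).edgeFinset + #(innerGraph G C).edgeFinset = #G.edgeFinset := by
  classical
  have cut_eq : (cutGraph G C).edgeFinset =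
      G.edgeFinset ∩ ((⊤ : SimpleGraph α).comap C).edgeFinset := by
    ext; rw [SimpleGraph.mem_edgeFinset, cutGraph]; simp
  have inner_eq : (innerGraph G C).edgeFinset =
      G.edgeFinset \ ((⊤ : SimpleGraph α).comap C).edgeFinset := by
    ext; rw [SimpleGraph.mem_edgeFinset, innerGraph]; simp
  rw [cut_eq, inner_eq, card_inter_add_card_sdiff]

variable [DecidableEq V]

lemma card_interedges_cutGraph_piecewise_le (S B : Finset V) (C : V → α) (m : α) :
    #((cutGraph G (B.piecewise (fun _ => m) C)).interedges S S) ≤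
      #((cutGraph G C).interedges (S \ B) (S \ B)) + 2 * #(G.interedges B (S \ B)) := by
  have subset : (cutGraph G (B.piecewise (fun _ => m) C)).interedges S S ⊆
      (cutGraph G C).interedges (S \ B) (S \ B) ∪
        (G.interedges B (S \ B) ∪ G.interedges (S \ B) B) := by
    rintro ⟨a, b⟩ hab
    simp only [SimpleGraph.mk_mem_interedges_iff, cutGraph_adj, mem_union, mem_sdiff] at hab ⊢
    by_cases ha : a ∈ B <;> by_cases hb : b ∈ B <;> simp_all
  have comm : #(G.interedges (S \ B) B) = #(G.interedges B (S \ B)) :=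
    have := G.symm
    Rel.card_interedges_comm ..
  calc #((cutGraph G (B.piecewise (fun _ => m) C)).interedges S S)
      ≤ #((cutGraph G C).interedges (S \ B) (S \ B)) +
          (#(G.interedges B (S \ B)) + #(G.interedges (S \ B) B)) :=
        (card_le_card subset).trans <|
          (card_union_le _ _).trans <| Nat.add_le_add_left (card_union_le _ _) _
    _ = _ := by rw [comm, two_mul]

lemma card_interedges_innerGraph_add_le_piecewise {S B : Finset V} (hB : B ⊆ S)
    (C : V → α) (m : α) :
    #((innerGraph G C).interedges (S \ B) (S \ B)) + #(G.interedges B B) ≤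
      #((innerGraph G (B.piecewise (fun _ => m) C)).interedges S S) := by
  have disjoint : Disjoint ((innerGraph G C).interedges (S \ B) (S \ B)) (G.interedges B B) := by
    rw [disjoint_left]
    rintro ⟨a, b⟩ hab hab'
    rw [SimpleGraph.mk_mem_interedges_iff] at hab hab'
    exact (mem_sdiff.1 hab.1).2 hab'.1
  rw [← card_union_of_disjoint disjoint]
  refine card_le_card ?_
  rintro ⟨a, b⟩ hab
  simp only [SimpleGraph.mk_mem_interedges_iff, innerGraph_adj, mem_union, mem_sdiff] at hab ⊢
  rcases hab with ⟨⟨haS, haB⟩, ⟨hbS, hbB⟩, hab⟩ | ⟨ha, hb, hab⟩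
  · simpa [haS, hbS, haB, hbB] using hab
  · simpa [ha, hb, hB ha, hB hb] using hab

end CutGraph

section Pivot

variable {V : Type*}

/-- `C` restricts to a partition of `S` into cliques of `G`: the relative form of
`IsCliquePartition`, on which the pivoting induction runs. -/
def IsCliquePartitionOn (G : SimpleGraph V) (S : Finset V) (C : V → ℕ) : Prop :=
  ∀ i ∈ S, ∀ j ∈ S, i ≠ j → C i = C j → G.Adj i j

lemma IsCliquePartitionOn.piecewise [DecidableEq V] {G : SimpleGraph V} {S B : Finset V}
    {C : V → ℕ} {m : ℕ} (hC : IsCliquePartitionOn G (S \ B) C) (hB : G.IsClique (B : Set V))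
    (hm : m ∉ (S \ B).image C) : IsCliquePartitionOn G S (B.piecewise (fun _ => m) C) := by
  have fresh {v : V} (hvS : v ∈ S) (hvB : v ∉ B) : C v ≠ m := fun h =>
    hm (mem_image.2 ⟨v, mem_sdiff.2 ⟨hvS, hvB⟩, h⟩)
  intro i hi j hj hij hCij
  by_cases hiB : i ∈ B <;> by_cases hjB : j ∈ B <;>
    simp only [hiB, hjB, not_false_eq_true, piecewise_eq_of_mem, piecewise_eq_of_notMem] at hCij
  · exact hB hiB hjB hij
  · exact absurd hCij.symm (fresh hj hjB)
  · exact absurd hCij (fresh hi hiB)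
  · exact hC i (mem_sdiff.2 ⟨hi, hiB⟩) j (mem_sdiff.2 ⟨hj, hjB⟩) hij hCij

variable [DecidableEq V]

/-- The closed neighbourhood of `k` in `H`, within the set `S` of vertices that are still
unassigned: the part created by the pivot `k`. -/
def closedNeighborFinsetIn (H : SimpleGraph V) [DecidableRel H.Adj] (S : Finset V) (k : V) :
    Finset V :=
  {v ∈ S | v = k ∨ H.Adj k v}

variable {H F : SimpleGraph V} [DecidableRel H.Adj] {S : Finset V} {k v : V}

lemma mem_closedNeighborFinsetIn :
    v ∈ closedNeighborFinsetIn H S k ↔ v ∈ S ∧ (v = k ∨ H.Adj k v) :=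
  mem_filter

lemma isClique_closedNeighborFinsetIn
    (hclosed : ∀ a b c, IsOpenWedge H a b c → F.Adj a b) (S : Finset V) (k : V) :
    (H ⊔ F).IsClique (closedNeighborFinsetIn H S k : Set V) := by
  intro a ha b hb hab
  rw [mem_coe, mem_closedNeighborFinsetIn] at ha hb
  rcases ha.2 with rfl | hka <;> rcases hb.2 with rfl | hkb
  · exact absurd rfl hab
  · exact Or.inl hkb
  · exact Or.inl hka.symm
  · exact or_iff_not_imp_left.2 fun hnot => hclosed a b k ⟨hka.symm, hkb.symm, hab, hnot⟩

lemma sum_card_interedges_closedNeighborFinsetIn_le [DecidableRel F.Adj]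
    (hclosed : ∀ a b c, IsOpenWedge H a b c → F.Adj a b) (S : Finset V) :
    ∑ k ∈ S, #(H.interedges (closedNeighborFinsetIn H S k) (S \ closedNeighborFinsetIn H S k)) ≤
      ∑ k ∈ S, #(F.interedges (closedNeighborFinsetIn H S k) (closedNeighborFinsetIn H S k)) := by
  rw [← card_sigma, ← card_sigma]
  -- Re-centre the wedge `k - j - x`: its cost at the pivot `k` is its reward at the pivot `j`.
  refine card_le_card_of_injOn (fun w => ⟨w.2.1, w.1, w.2.2⟩) ?_ ?_
  · rintro ⟨k, j, x⟩ hw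
    simp only [mem_coe, mem_sigma, SimpleGraph.mk_mem_interedges_iff, mem_sdiff,
      mem_closedNeighborFinsetIn] at hw ⊢
    obtain ⟨hk, ⟨hj, hkj⟩, ⟨hx, hkx⟩, hjx⟩ := hw
    obtain ⟨hxk, hnot⟩ := not_or.1 fun h => hkx ⟨hx, h⟩
    have hkj : H.Adj k j := hkj.resolve_left (by rintro rfl; exact hnot hjx)
    exact ⟨hj, ⟨hk, Or.inr hkj.symm⟩, ⟨hx, Or.inr hjx⟩,
      hclosed k x j ⟨hkj, hjx.symm, Ne.symm hxk, hnot⟩⟩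
  · rintro ⟨k, j, x⟩ - ⟨k', j', x'⟩ - heq
    simp_all

end Pivot

theorem exists_isCliquePartitionOn_card_cut_le {V : Type*} {H F : SimpleGraph V}
    [DecidableRel H.Adj] [DecidableRel F.Adj]
    (hclosed : ∀ a b c, IsOpenWedge H a b c → F.Adj a b) (S : Finset V) :
    ∃ C : V → ℕ, IsCliquePartitionOn (H ⊔ F) S C ∧
      #((cutGraph H C).interedges S S) ≤ 2 * #((innerGraph F C).interedges S S) := by
  classical
  induction S using Finset.strongInduction with
  | H S ih =>
    rcases S.eq_empty_or_nonempty with rfl | hS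
    · exact ⟨fun _ => 0, by simp [IsCliquePartitionOn], by simp⟩
    obtain ⟨k, hk, hpivot⟩ :=
      exists_le_of_sum_le hS (sum_card_interedges_closedNeighborFinsetIn_le hclosed S)
    set B := closedNeighborFinsetIn H S k
    have hBS : B ⊆ S := filter_subset _ _
    have hkB : k ∈ B := mem_closedNeighborFinsetIn.2 ⟨hk, Or.inl rfl⟩
    obtain ⟨C, hC, hcut⟩ := ih (S \ B) (sdiff_ssubset hBS ⟨k, hkB⟩)
    obtain ⟨m, hm⟩ := Infinite.exists_notMem_finset ((S \ B).image C)
    refine ⟨B.piecewise (fun _ => m) C,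
      hC.piecewise (isClique_closedNeighborFinsetIn hclosed S k) hm, ?_⟩
    have hcut_new := card_interedges_cutGraph_piecewise_le H S B C m
    have hinner_new := card_interedges_innerGraph_add_le_piecewise F hBS C m
    lia

section Counting

variable {V : Type*} [Fintype V]

lemma card_interedges_univ (G : SimpleGraph V) [DecidableRel G.Adj] :
    #(G.interedges univ univ) = 2 * #G.edgeFinset := by
  classical
  rw [SimpleGraph.two_mul_card_edgeFinset, SimpleGraph.interedges_def, univ_product_univ]

variable [LinearOrder V]

lemma card_filter_pairsLt_adj (G : SimpleGraph V) [DecidableRel G.Adj] :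
    #{p ∈ pairsLt V | G.Adj p.1 p.2} = #G.edgeFinset := by
  refine card_nbij (fun p => s(p.1, p.2)) ?_ ?_ ?_
  · rintro ⟨a, b⟩ hab
    simpa using (mem_filter.1 hab).2
  · rintro ⟨a, b⟩ hab ⟨c, d⟩ hcd heq
    simp only [pairsLt, coe_filter, mem_filter, mem_univ, true_and, Set.mem_ofPred_eq] at hab hcd
    rcases Sym2.eq_iff.1 heq with ⟨rfl, rfl⟩ | ⟨rfl, rfl⟩
    · rfl
    · exact absurd hab.1 hcd.1.asymm
  · intro e he
    induction e with | h a b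
    have hab : G.Adj a b := by simpa using he
    rcases hab.ne.lt_or_gt with hlt | hgt
    · exact ⟨(a, b), by simp [pairsLt, hlt, hab], rfl⟩
    · exact ⟨(b, a), by simp [pairsLt, hgt, hab.symm], Sym2.eq_swap⟩

lemma cutEdges_eq_card_edgeFinset_cutGraph (G : SimpleGraph V) [DecidableRel G.Adj] (C : V → ℕ) :
    cutEdges G C = #(cutGraph G C).edgeFinset := by
  simp only [cutEdges, ← card_filter_pairsLt_adj, cutGraph_adj]

end Counting

section Wedges

variable {V : Type*} {G : SimpleGraph V}

lemma IsOpenWedge.exists_mem_wedgeEdges_cutGraph [DecidableEq V] {t : V × V × V}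
    (ht : IsOpenWedge G t.1 t.2.1 t.2.2) {C : V → ℕ} (hC : IsCliquePartition G C) :
    ∃ e ∈ wedgeEdges t, e ∈ (cutGraph G C).edgeSet := by
  obtain ⟨hik, hjk, hij, hnot⟩ := ht
  by_cases hCik : C t.1 = C t.2.2
  · have hCjk : C t.2.1 ≠ C t.2.2 := fun h => hnot (hC _ _ hij (hCik.trans h.symm))
    exact ⟨s(t.2.1, t.2.2), by simp [wedgeEdges], hjk, hCjk⟩
  · exact ⟨s(t.1, t.2.2), by simp [wedgeEdges], hik, hCik⟩

lemma card_le_cutEdges [Fintype V] [LinearOrder V] [DecidableRel G.Adj] {M : Finset (V × V × V)}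
    (hM : ∀ t ∈ M, IsOpenWedge G t.1 t.2.1 t.2.2)
    (hdisj : ∀ t₁ ∈ M, ∀ t₂ ∈ M, t₁ ≠ t₂ → Disjoint (wedgeEdges t₁) (wedgeEdges t₂))
    {C : V → ℕ} (hC : IsCliquePartition G C) : #M ≤ cutEdges G C := by
  have disjoint : (M : Set (V × V × V)).PairwiseDisjoint
      fun t => wedgeEdges t ∩ (cutGraph G C).edgeFinset := fun t₁ h₁ t₂ h₂ hne =>
    (hdisj t₁ h₁ t₂ h₂ hne).mono inter_subset_left inter_subset_left
  have nonempty : ∀ t ∈ M, (wedgeEdges t ∩ (cutGraph G C).edgeFinset).Nonempty := fun t ht => by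
    obtain ⟨e, het, heC⟩ := (hM t ht).exists_mem_wedgeEdges_cutGraph hC
    exact ⟨e, mem_inter.2 ⟨het, SimpleGraph.mem_edgeFinset.2 heC⟩⟩
  rw [cutEdges_eq_card_edgeFinset_cutGraph]
  exact (card_le_card_biUnion disjoint nonempty).trans
    (card_le_card (biUnion_subset.2 fun _ _ => inter_subset_right))

variable [DecidableEq V]

/-- The graph whose edges are those of the wedges in `M`. -/
def wedgeGraph (M : Finset (V × V × V)) : SimpleGraph V :=
  SimpleGraph.fromEdgeSet (M.biUnion wedgeEdges)

variable {M : Finset (V × V × V)} {a b : V}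

lemma wedgeGraph_adj :
    (wedgeGraph M).Adj a b ↔ (∃ t ∈ M, s(a, b) ∈ wedgeEdges t) ∧ a ≠ b := by
  simp [wedgeGraph]

instance : DecidableRel (wedgeGraph M).Adj :=
  fun _ _ => decidable_of_iff' _ wedgeGraph_adj

lemma wedgeGraph_le (hM : ∀ t ∈ M, IsOpenWedge G t.1 t.2.1 t.2.2) : wedgeGraph M ≤ G := by
  intro a b hab
  obtain ⟨⟨t, ht, habt⟩, -⟩ := wedgeGraph_adj.1 hab
  obtain ⟨hik, hjk, -, -⟩ := hM t ht
  rw [← SimpleGraph.mem_edgeSet]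
  rcases mem_insert.1 habt with h | h
  · rwa [h]
  · rwa [mem_singleton.1 h]

lemma card_edgeFinset_wedgeGraph_le [Fintype V] (M : Finset (V × V × V)) :
    #(wedgeGraph M).edgeFinset ≤ 2 * #M := by
  have subset : (wedgeGraph M).edgeFinset ⊆ M.biUnion wedgeEdges := fun e he => by
    rw [SimpleGraph.mem_edgeFinset, wedgeGraph, SimpleGraph.edgeSet_fromEdgeSet] at he
    exact he.1
  calc #(wedgeGraph M).edgeFinset
      ≤ #(M.biUnion wedgeEdges) := card_le_card subset
    _ ≤ #M * 2 := card_biUnion_le_card_mul _ _ _ fun _ _ => card_le_two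
    _ = 2 * #M := mul_comm _ _

lemma IsOpenWedge.wedgeGraph_adj_of_maximal
    (hmax : ∀ i j k : V, IsOpenWedge G i j k →
      ∃ t ∈ M, (wedgeEdges (i, j, k) ∩ wedgeEdges t).Nonempty)
    {i j k : V} (h : IsOpenWedge (G \ wedgeGraph M) i j k) : (wedgeGraph M).Adj i j := by
  obtain ⟨⟨hik, hik'⟩, ⟨hjk, hjk'⟩, hij, hnot⟩ := h
  by_contra hij'
  obtain ⟨t, ht, e, he⟩ := hmax i j k ⟨hik, hjk, hij, fun h => hnot ⟨h, hij'⟩⟩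
  obtain ⟨heijk, het⟩ := mem_inter.1 he
  rcases mem_insert.1 heijk with rfl | heq
  · exact hik' (wedgeGraph_adj.2 ⟨⟨t, ht, het⟩, hik.ne⟩)
  · rw [mem_singleton.1 heq] at het
    exact hjk' (wedgeGraph_adj.2 ⟨⟨t, ht, het⟩, hjk.ne⟩)

end Wedges

section UpperBound

variable {V : Type*} [Fintype V] [LinearOrder V]

theorem exists_isCliquePartition_sup_cutEdges_le {H F : SimpleGraph V} [DecidableRel H.Adj]
    [DecidableRel F.Adj] (hclosed : ∀ a b c, IsOpenWedge H a b c → F.Adj a b) :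
    ∃ C : V → ℕ, IsCliquePartition (H ⊔ F) C ∧ cutEdges (H ⊔ F) C ≤ 2 * #F.edgeFinset := by
  obtain ⟨C, hC, hcut⟩ := exists_isCliquePartitionOn_card_cut_le hclosed univ
  refine ⟨C, fun i j => hC i (mem_univ i) j (mem_univ j), ?_⟩
  rw [card_interedges_univ, card_interedges_univ] at hcut
  have hsplit := card_edgeFinset_cutGraph_add_card_edgeFinset_innerGraph F C
  have hunion : (cutGraph (H ⊔ F) C).edgeFinset =
      (cutGraph H C).edgeFinset ∪ (cutGraph F C).edgeFinset := by
    ext; simp [cutGraph_sup]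
  calc cutEdges (H ⊔ F) C
      = #((cutGraph H C).edgeFinset ∪ (cutGraph F C).edgeFinset) := by
        rw [cutEdges_eq_card_edgeFinset_cutGraph, hunion]
    _ ≤ #(cutGraph H C).edgeFinset + #(cutGraph F C).edgeFinset := card_union_le _ _
    _ ≤ 2 * #F.edgeFinset := by lia

theorem exists_isCliquePartition_cutEdges_le {G : SimpleGraph V} [DecidableRel G.Adj]
    {M : Finset (V × V × V)} (hM : ∀ t ∈ M, IsOpenWedge G t.1 t.2.1 t.2.2)
    (hmax : ∀ i j k : V, IsOpenWedge G i j k →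
      ∃ t ∈ M, (wedgeEdges (i, j, k) ∩ wedgeEdges t).Nonempty) :
    ∃ C : V → ℕ, IsCliquePartition G C ∧ cutEdges G C ≤ 4 * #M := by
  obtain ⟨C, hC, hcut⟩ := exists_isCliquePartition_sup_cutEdges_le
    (H := G \ wedgeGraph M) (F := wedgeGraph M)
    fun _ _ _ h => h.wedgeGraph_adj_of_maximal hmax
  have hG : G \ wedgeGraph M ⊔ wedgeGraph M = G := sdiff_sup_cancel (wedgeGraph_le hM)
  have hedges := card_edgeFinset_wedgeGraph_le M
  simp only [hG] at hC hcut
  exact ⟨C, hC, by lia⟩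

end UpperBound

/-- A maximal edge-disjoint collection `M` of open wedges yields a clique partition with at
most `4·|M|` cut edges; moreover `|M|` lower bounds the cut edges of every clique partition,
so this clique partition is a 4-approximation for cluster deletion. -/
theorem stmt8 {V : Type*} [Fintype V] [LinearOrder V]
    (G : SimpleGraph V) [DecidableRel G.Adj]
    (M : Finset (V × V × V))
    (hM : ∀ t ∈ M, IsOpenWedge G t.1 t.2.1 t.2.2)
    (hdisj : ∀ t₁ ∈ M, ∀ t₂ ∈ M, t₁ ≠ t₂ → Disjoint (wedgeEdges t₁) (wedgeEdges t₂))
    (hmax : ∀ i j k : V, IsOpenWedge G i j k →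
      ∃ t ∈ M, (wedgeEdges (i, j, k) ∩ wedgeEdges t).Nonempty) :
    ∃ C : V → ℕ, IsCliquePartition G C ∧ cutEdges G C ≤ 4 * M.card ∧
      (∀ C' : V → ℕ, IsCliquePartition G C' → M.card ≤ cutEdges G C') ∧
      cutEdges G C ≤ 4 * sInf {n : ℕ | ∃ C' : V → ℕ,
        IsCliquePartition G C' ∧ n = cutEdges G C'} := by
  obtain ⟨C, hC, hcut⟩ := exists_isCliquePartition_cutEdges_le hM hmax
  have hlower : ∀ C' : V → ℕ, IsCliquePartition G C' → #M ≤ cutEdges G C' :=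
    fun _ => card_le_cutEdges hM hdisj
  refine ⟨C, hC, hcut, hlower, ?_⟩
  obtain ⟨C', hC', hopt⟩ := Nat.sInf_mem
    (s := {n : ℕ | ∃ C' : V → ℕ, IsCliquePartition G C' ∧ n = cutEdges G C'}) ⟨_, C, hC, rfl⟩
  rw [hopt]
  exact hcut.trans (Nat.mul_le_mul_left 4 (hlower C' hC'))
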